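/- Let Σ_A(ℕ) be a topologically mixing, finitely primitive (BIP) countable Markov shift and f : Σ_A(ℕ) → ℝ satisfy the Walters condition with Var_1 f < ∞ and P(f) < ∞. Suppose f has a unique maximizing measure μ. Then for any fixed point a ∈ supp(μ) and every bounded continuous calibrated sub-action V for f, V(x) = V(a) + S_f(a,x) for all x ∈ Σ_A(ℕ). In particular, any two bounded calibrated sub-actions for f differ by a constant. -/

import Mathlib

open Filter Topology MeasureTheory
open scoped ENNReal

/-- The countable Markov shift over alphabet ℕ determined by the 0-1 matrix `A`. -/
def MarkovShift (A : ℕ → ℕ → Bool) : Type :=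
  {x : ℕ → ℕ // ∀ i, A (x i) (x (i + 1)) = true}

namespace MarkovShift

variable {A : ℕ → ℕ → Bool}

instance : TopologicalSpace (MarkovShift A) :=
  instTopologicalSpaceSubtype

instance : MeasurableSpace (MarkovShift A) := borel _

instance : BorelSpace (MarkovShift A) := ⟨rfl⟩

/-- The shift map. -/
def shift (x : MarkovShift A) : MarkovShift A :=
  ⟨fun n => x.1 (n + 1), fun i => x.2 (i + 1)⟩

/-- The cylinder set determined by a finite word. -/
def cylinder (w : List ℕ) : Set (MarkovShift A) :=
  {x | ∀ i : Fin w.length, x.1 i = w.get i}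

/-- The cylinder set determined by the first `m` coordinates of `x`. -/
def cylOf (x : MarkovShift A) (m : ℕ) : Set (MarkovShift A) :=
  {y | ∀ i < m, y.1 i = x.1 i}

/-- A symbol is admissible when its cylinder is nonempty. -/
def Admissible (A : ℕ → ℕ → Bool) (a : ℕ) : Prop :=
  ∃ x : MarkovShift A, x.1 0 = a

/-- Topologically mixing. -/
def TopologicallyMixing (A : ℕ → ℕ → Bool) : Prop :=
  ∀ a b : ℕ, Admissible A a → Admissible A b →
    ∃ N : ℕ, ∀ n ≥ N, ∃ x : MarkovShift A, x.1 0 = a ∧ (shift^[n] x).1 0 = b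

/-- Finitely primitive (BIP). -/
def FinitelyPrimitive (A : ℕ → ℕ → Bool) : Prop :=
  ∃ (K₀ : ℕ) (F : Finset ℕ), ∀ a b : ℕ, Admissible A a → Admissible A b →
    ∃ w : List ℕ, w.length = K₀ ∧ (∀ c ∈ w, c ∈ F) ∧
      List.Chain' (fun u v => A u v = true) (a :: (w ++ [b]))

/-- First coordinate where two distinct points disagree. -/
noncomputable def firstDiff (x y : MarkovShift A) (h : x ≠ y) : ℕ :=
  Nat.find (Function.ne_iff.mp (fun hxy : x.1 = y.1 => h (Subtype.ext hxy)))

open Classical in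
/-- The metric `d(x,y) = r^{t(x,y)}`. -/
noncomputable def dist' (r : ℝ) (x y : MarkovShift A) : ℝ :=
  if h : x = y then 0 else r ^ firstDiff x y h

/-- Birkhoff sum `S_n f`. -/
def birkhoff (f : MarkovShift A → ℝ) (n : ℕ) (x : MarkovShift A) : ℝ :=
  ∑ j ∈ Finset.range n, f (shift^[j] x)

/-- The set of values `|S_n f x - S_n f y|` over pairs agreeing on the first `m` coordinates. -/
def varSet (f : MarkovShift A → ℝ) (n m : ℕ) : Set ℝ :=
  {c | ∃ x y : MarkovShift A, (∀ i < m, x.1 i = y.1 i) ∧ c = |birkhoff f n x - birkhoff f n y|}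

/-- `Var_m (S_n f)`. -/
noncomputable def varBirk (f : MarkovShift A → ℝ) (n m : ℕ) : ℝ := sSup (varSet f n m)

/-- `Var_1 f < ∞`. -/
def Var1Finite (f : MarkovShift A → ℝ) : Prop := BddAbove (varSet f 1 1)

/-- The set whose supremum is `sup_{n ≥ 1} Var_{n+k}(S_n f)`. -/
def waltersSet (f : MarkovShift A → ℝ) (k : ℕ) : Set ℝ :=
  {c | ∃ n, 1 ≤ n ∧ c ∈ varSet f n (n + k)}

/-- `M_k = sup_{n ≥ 1} Var_{n+k}(S_n f)`. -/
noncomputable def waltersSup (f : MarkovShift A → ℝ) (k : ℕ) : ℝ := sSup (waltersSet f k)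

/-- The Walters condition. -/
def SatisfiesWalters (f : MarkovShift A → ℝ) : Prop :=
  (∀ k, 1 ≤ k → BddAbove (waltersSet f k)) ∧
    Tendsto (fun k => waltersSup f k) atTop (𝓝 0)

/-- The partition function `Z_n(f,a) = Σ_{σ^n x = x, x₀ = a} e^{S_n f (x)}`. -/
noncomputable def partitionSum (f : MarkovShift A → ℝ) (n : ℕ) (a : ℕ) : ℝ :=
  ∑' x : {x : MarkovShift A // shift^[n] x = x ∧ x.1 0 = a}, Real.exp (birkhoff f n x.1)

/-- `f` has (finite) Gurevich pressure `p`. -/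
def HasGurevichPressure (f : MarkovShift A → ℝ) (p : ℝ) : Prop :=
  ∀ a : ℕ, Admissible A a →
    (∀ n, 1 ≤ n → Summable fun x : {x : MarkovShift A // shift^[n] x = x ∧ x.1 0 = a} =>
        Real.exp (birkhoff f n x.1)) ∧
    Tendsto (fun n : ℕ => (1 / (n : ℝ)) * Real.log (partitionSum f n a)) atTop (𝓝 p)

/-- σ-invariant Borel probability measure. -/
def IsInvariantProb (μ : Measure (MarkovShift A)) : Prop :=
  IsProbabilityMeasure μ ∧ μ.map shift = μ

/-- `m(f)`, the maximal ergodic average. -/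
noncomputable def mf (f : MarkovShift A → ℝ) : ℝ :=
  sSup {c | ∃ μ : Measure (MarkovShift A),
    IsInvariantProb μ ∧ Integrable f μ ∧ ∫ x, f x ∂μ = c}

/-- A maximizing measure for `f`. -/
def IsMaximizing (f : MarkovShift A → ℝ) (μ : Measure (MarkovShift A)) : Prop :=
  IsInvariantProb μ ∧ Integrable f μ ∧ ∫ x, f x ∂μ = mf f

/-- Bounded real valued function. -/
def BoundedFun (g : MarkovShift A → ℝ) : Prop := ∃ C, ∀ x, |g x| ≤ C

/-- A bounded calibrated sub-action for `f`. -/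
def IsCalibratedSubaction (f V : MarkovShift A → ℝ) : Prop :=
  Continuous V ∧ BoundedFun V ∧
    (∀ x, f x + V x - V (shift x) - mf f ≤ 0) ∧
    (∀ y, ∃ x, shift x = y ∧ f x + V x - V (shift x) - mf f = 0)

/-- The Ruelle transfer operator `(L_g u)(x) = Σ_{σ y = x} e^{g(y)} u(y)`. -/
noncomputable def ruelle (g u : MarkovShift A → ℝ) (x : MarkovShift A) : ℝ :=
  ∑' y : {y : MarkovShift A // shift y = x}, Real.exp (g y.1) * u y.1

/-- Ruelle-Perron-Frobenius data for the potential `f` with pressure `p`: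
eigenfunction `h`, eigenmeasure `ν`. -/
def IsRPF (f : MarkovShift A → ℝ) (p : ℝ) (h : MarkovShift A → ℝ)
    (ν : Measure (MarkovShift A)) : Prop :=
  Continuous h ∧ (∀ x, 0 < h x) ∧
    (∀ x, ruelle f h x = Real.exp p * h x) ∧
    IsProbabilityMeasure ν ∧
    (∀ g : MarkovShift A → ℝ, Continuous g → BoundedFun g →
      ∫ x, ruelle f g x ∂ν = Real.exp p * ∫ x, g x ∂ν) ∧
    ∫ x, h x ∂ν = 1

/-- The Gibbs measure `dμ = h dν`. -/
noncomputable def gibbs (h : MarkovShift A → ℝ) (ν : Measure (MarkovShift A)) :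
    Measure (MarkovShift A) :=
  ν.withDensity fun x => ENNReal.ofReal (h x)

/-- The Mañé potential `S_f(x,y)` (with respect to the metric of parameter `r`). -/
noncomputable def manePot (r : ℝ) (f : MarkovShift A → ℝ) (x y : MarkovShift A) : EReal :=
  ⨅ ε : {ε : ℝ // 0 < ε}, ⨆ n : {n : ℕ // 1 ≤ n},
    ⨆ _z : {z : MarkovShift A // dist' r x z < ε.1 ∧ shift^[n.1] z = y},
      ((birkhoff (fun w => f w - mf f) n.1 _z.1 : ℝ) : EReal)

/-- The (topological) support of a measure. -/
def msupport (μ : Measure (MarkovShift A)) : Set (MarkovShift A) :=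
  {x | ∀ U : Set (MarkovShift A), IsOpen U → x ∈ U → 0 < μ U}

end MarkovShift

/-!
A calibrated sub-action `V` makes `f - m(f) ≤ V ∘ σ - V`, so Birkhoff sums telescope and
`S_f(a, x) ≤ V x - V a` by continuity of `V` at `a`. For the converse, choosing calibrated preimages
produces a backward orbit of `x` along which the Birkhoff sums equal `V x - V z`; it remains to see
that it visits every neighbourhood of `a`. Finite primitivity, `Var₁ f < ∞` and finite pressure make
the sets `{f ≥ t}` meet finitely many 1-cylinders; since `V` is bounded, `f` is bounded below
along the backward orbit, which therefore stays in a compact set. The weak limits of its empirical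
measures are invariant and maximizing, hence equal to `μ`; if the orbit avoided an open set, that
set would be `μ`-null and could not contain a point of the support.
-/

section EmpiricalMeasure

variable {X : Type*} [MeasurableSpace X]

/-- The uniform probability measure on the first `n` terms of `y`, counted with multiplicity
(the zero measure for `n = 0`). -/
noncomputable def empiricalMeasure (y : ℕ → X) (n : ℕ) : Measure X :=
  (n : ℝ≥0∞)⁻¹ • ∑ k ∈ Finset.range n, Measure.dirac (y k)

theorem isProbabilityMeasure_empiricalMeasure (y : ℕ → X) {n : ℕ} (hn : n ≠ 0) :
    IsProbabilityMeasure (empiricalMeasure y n) := by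
  constructor
  simp only [empiricalMeasure, Measure.smul_apply, Measure.finsetSum_apply, measure_univ,
    Finset.sum_const, Finset.card_range, smul_eq_mul, nsmul_eq_mul, mul_one]
  exact ENNReal.inv_mul_cancel (Nat.cast_ne_zero.2 hn) (ENNReal.natCast_ne_top n)

theorem integral_empiricalMeasure (y : ℕ → X) (n : ℕ) {g : X → ℝ} (hg : StronglyMeasurable g) :
    ∫ x, g x ∂empiricalMeasure y n = (n : ℝ)⁻¹ * ∑ k ∈ Finset.range n, g (y k) := by
  rw [empiricalMeasure, integral_smul_measure, integral_finsetSum_measure]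
  · simp [integral_dirac' _ _ hg]
  · exact fun k _ => integrable_dirac' hg enorm_lt_top

variable [TopologicalSpace X]

/-- `ν` is an accumulation point of the empirical measures of `y`. Testing against all continuous
functions, bounded or not, is what allows unbounded potentials later on. -/
def IsEmpiricalLimit (y : ℕ → X) (ν : Measure X) : Prop :=
  ∃ L : Filter ℕ, L.NeBot ∧ L ≤ atTop ∧ ∀ g : X → ℝ, Continuous g →
    Tendsto (fun n : ℕ => (n : ℝ)⁻¹ * ∑ k ∈ Finset.range n, g (y k)) L (𝓝 (∫ x, g x ∂ν))

theorem exists_isEmpiricalLimit [CompactSpace X] [T2Space X] [BorelSpace X] (y : ℕ → X) :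
    ∃ ν : Measure X, IsProbabilityMeasure ν ∧ IsEmpiricalLimit y ν := by
  let e (n : ℕ) : ProbabilityMeasure X :=
    ⟨empiricalMeasure y (n + 1), isProbabilityMeasure_empiricalMeasure y n.succ_ne_zero⟩
  let U : Ultrafilter ℕ := Filter.hyperfilter ℕ
  obtain ⟨ν, -, hν : Tendsto e U (𝓝 ν)⟩ :=
    (isCompact_univ (X := ProbabilityMeasure X)).ultrafilter_le_nhds (U.map e) (by simp)
  refine ⟨ν, inferInstance, map (· + 1) U, inferInstance,
    (tendsto_add_atTop_nat 1).mono_left Nat.hyperfilter_le_atTop, fun g hg => ?_⟩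
  have hint := ProbabilityMeasure.tendsto_iff_forall_integral_tendsto.1 hν
    (BoundedContinuousFunction.mkOfCompact ⟨g, hg⟩)
  exact tendsto_map'_iff.2
    (hint.congr fun n => integral_empiricalMeasure y (n + 1) hg.stronglyMeasurable)

theorem exists_isEmpiricalLimit_of_isCompact [T2Space X] [BorelSpace X] {K : Set X}
    (hK : IsCompact K) {y : ℕ → X} (hy : ∀ n, y n ∈ K) :
    ∃ ν : Measure X, IsProbabilityMeasure ν ∧ (∀ᵐ x ∂ν, x ∈ K) ∧ IsEmpiricalLimit y ν := by
  have : CompactSpace K := isCompact_iff_compactSpace.1 hK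
  obtain ⟨ν, _, L, hL, hLtop, hlim⟩ :=
    exists_isEmpiricalLimit fun n => (⟨y n, hy n⟩ : K)
  have hval : AEMeasurable ((↑) : K → X) ν := measurable_subtype_coe.aemeasurable
  refine ⟨ν.map (↑), Measure.isProbabilityMeasure_map hval, ?_, L, hL, hLtop, fun g hg => ?_⟩
  · simpa only [Subtype.range_coe] using
      ae_map_mem_range ((↑) : K → X) (by simpa using hK.measurableSet) ν
  · rw [integral_map hval hg.aestronglyMeasurable]
    exact hlim (fun z => g z) (hg.comp continuous_subtype_val)

theorem tendsto_average_of_telescoping {u h : ℕ → ℝ} {c C : ℝ} (hC : ∀ n, |h n| ≤ C)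
    (hu : ∀ n, u n = c + (h n - h (n + 1))) :
    Tendsto (fun n : ℕ => (n : ℝ)⁻¹ * ∑ k ∈ Finset.range n, u k) atTop (𝓝 c) := by
  have hbdd (n : ℕ) : |h 0 - h n| ≤ 2 * C := by linarith [abs_sub (h 0) (h n), hC 0, hC n]
  have hzero : Tendsto (fun n : ℕ => (n : ℝ)⁻¹ * (h 0 - h n)) atTop (𝓝 0) :=
    tendsto_inv_atTop_nhds_zero_nat.zero_mul_isBoundedUnder_le
      ⟨2 * C, eventually_map.2 (Eventually.of_forall hbdd)⟩
  refine (by simpa using hzero.const_add c : Tendsto _ _ (𝓝 c)).congr' ?_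
  filter_upwards [eventually_ne_atTop 0] with n hn
  simp only [hu, Finset.sum_add_distrib, Finset.sum_range_sub', Finset.sum_const,
    Finset.card_range, nsmul_eq_mul]
  field_simp

theorem IsEmpiricalLimit.integral_eq_of_telescoping {y : ℕ → X} {ν : Measure X}
    (hν : IsEmpiricalLimit y ν) {g : X → ℝ} (hg : Continuous g) {h : ℕ → ℝ} {c C : ℝ}
    (hC : ∀ n, |h n| ≤ C) (hgh : ∀ n, g (y n) = c + (h n - h (n + 1))) :
    ∫ x, g x ∂ν = c := by
  obtain ⟨L, _, hLtop, hlim⟩ := hν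
  exact tendsto_nhds_unique (hlim g hg) ((tendsto_average_of_telescoping hC hgh).mono_left hLtop)

theorem IsEmpiricalLimit.map_eq_of_backward [HasOuterApproxClosed X] [BorelSpace X] {T : X → X}
    (hT : Continuous T) {y : ℕ → X} (hy : ∀ n, T (y (n + 1)) = y n) {ν : Measure X}
    [IsFiniteMeasure ν] (hν : IsEmpiricalLimit (fun n => y (n + 1)) ν) : ν.map T = ν := by
  refine ext_of_forall_integral_eq_of_IsFiniteMeasure fun g => ?_
  rw [integral_map hT.aemeasurable g.continuous.aestronglyMeasurable, ← sub_eq_zero,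
    ← integral_sub (f := fun x => g (T x)) ((g.compContinuous ⟨T, hT⟩).integrable ν)
      (g.integrable ν)]
  exact hν.integral_eq_of_telescoping ((g.continuous.comp hT).sub g.continuous)
    (fun n => g.norm_coe_le_norm (y n)) fun n => by
      simp only [Pi.sub_apply, Function.comp_apply, hy, zero_add]

end EmpiricalMeasure

theorem integrable_of_ae_mem_isCompact {X : Type*} [TopologicalSpace X] [T2Space X]
    [MeasurableSpace X] [OpensMeasurableSpace X] {ν : Measure X} [IsFiniteMeasure ν] {K : Set X}
    (hK : IsCompact K) (hνK : ∀ᵐ x ∂ν, x ∈ K) {g : X → ℝ} (hg : Continuous g) :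
    Integrable g ν := by
  rw [← Measure.restrict_eq_self_of_ae_mem hνK]
  exact hg.continuousOn.integrableOn_compact hK

section Subaction

variable {X : Type*} {T : X → X} {g V : X → ℝ}

theorem birkhoffSum_le_of_le_coboundary (h : ∀ x, g x ≤ V (T x) - V x) (n : ℕ) (x : X) :
    birkhoffSum T g n x ≤ V (T^[n] x) - V x :=
  calc birkhoffSum T g n x
    _ ≤ ∑ k ∈ Finset.range n, (V (T^[k + 1] x) - V (T^[k] x)) := Finset.sum_le_sum fun k _ => by
        simpa only [Function.iterate_succ_apply'] using h (T^[k] x)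
    _ = V (T^[n] x) - V x := Finset.sum_range_sub (fun k => V (T^[k] x)) n

/-- A backward orbit `y 0 ← y 1 ← y 2 ← ⋯` of `T` along which the sub-action inequality
`g ≤ V ∘ T - V` is an equality (`g` is the normalized potential, with maximal average `0`). -/
structure IsCalibratedBackwardOrbit (T : X → X) (g V : X → ℝ) (y : ℕ → X) : Prop where
  map_succ : ∀ n, T (y (n + 1)) = y n
  apply_succ : ∀ n, g (y (n + 1)) = V (y n) - V (y (n + 1))

theorem exists_isCalibratedBackwardOrbit (h : ∀ y, ∃ x, T x = y ∧ g x = V y - V x) (x : X) :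
    ∃ y : ℕ → X, y 0 = x ∧ IsCalibratedBackwardOrbit T g V y := by
  choose s hTs hgs using h
  refine ⟨fun n => s^[n] x, rfl, fun n => ?_, fun n => ?_⟩
  · rw [Function.iterate_succ_apply', hTs]
  · rw [Function.iterate_succ_apply', hgs]

namespace IsCalibratedBackwardOrbit

variable {y : ℕ → X}

theorem iterate_apply (hy : IsCalibratedBackwardOrbit T g V y) (n : ℕ) : T^[n] (y n) = y 0 := by
  induction n with
  | zero => rfl
  | succ n ih => rw [Function.iterate_succ_apply, hy.map_succ, ih]

theorem birkhoffSum_eq (hy : IsCalibratedBackwardOrbit T g V y) (n : ℕ) :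
    birkhoffSum T g n (y n) = V (y 0) - V (y n) := by
  induction n with
  | zero => simp
  | succ n ih => rw [birkhoffSum_succ', hy.map_succ, hy.apply_succ, ih]; ring

theorem exists_invariant_measure [TopologicalSpace X] [T2Space X] [MeasurableSpace X]
    [BorelSpace X] [HasOuterApproxClosed X] (hy : IsCalibratedBackwardOrbit T g V y)
    (hT : Continuous T) (hg : Continuous g) {C : ℝ} (hV : ∀ n, |V (y n)| ≤ C) {K : Set X}
    (hK : IsCompact K) (hyK : ∀ n, y (n + 1) ∈ K) :
    ∃ ν : Measure X, IsProbabilityMeasure ν ∧ ν.map T = ν ∧ (∀ᵐ x ∂ν, x ∈ K) ∧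
      ∫ x, g x ∂ν = 0 := by
  obtain ⟨ν, hν, hνK, hlim⟩ := exists_isEmpiricalLimit_of_isCompact hK hyK
  exact ⟨ν, hν, hlim.map_eq_of_backward hT hy.map_succ, hνK,
    hlim.integral_eq_of_telescoping hg hV fun n => by rw [hy.apply_succ, zero_add]⟩

end IsCalibratedBackwardOrbit

end Subaction

namespace MarkovShift

section

variable {A : ℕ → ℕ → Bool}

theorem shift_iterate_val (x : MarkovShift A) (n i : ℕ) : (shift^[n] x).1 i = x.1 (i + n) := by
  induction n generalizing x with
  | zero => rfl
  | succ n ih => rw [Function.iterate_succ_apply, ih]; rfl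

theorem birkhoff_eq_birkhoffSum (f : MarkovShift A → ℝ) (n : ℕ) (x : MarkovShift A) :
    birkhoff f n x = birkhoffSum shift f n x :=
  rfl

theorem continuous_coord (i : ℕ) : Continuous fun x : MarkovShift A => x.1 i :=
  (continuous_apply i).comp continuous_subtype_val

theorem continuous_shift : Continuous (shift : MarkovShift A → MarkovShift A) :=
  Continuous.subtype_mk (continuous_pi fun n => continuous_coord (n + 1)) _

theorem isClosedEmbedding_val : IsClosedEmbedding fun x : MarkovShift A => x.1 := by
  suffices h : IsClosed {x : ℕ → ℕ | ∀ i, A (x i) (x (i + 1)) = true} from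
    h.isClosedEmbedding_subtypeVal
  rw [Set.ofPred_forall]
  refine isClosed_iInter fun i => isClosed_eq ?_ continuous_const
  have hA : Continuous fun q : ℕ × ℕ => A q.1 q.2 := continuous_of_discreteTopology
  have hpair : Continuous fun x : ℕ → ℕ => (x i, x (i + 1)) :=
    (continuous_apply i).prodMk (continuous_apply (i + 1))
  exact hA.comp hpair

instance : TopologicalSpace.MetrizableSpace (MarkovShift A) :=
  isClosedEmbedding_val.isEmbedding.metrizableSpace

instance : SecondCountableTopology (MarkovShift A) :=
  isClosedEmbedding_val.isEmbedding.secondCountableTopology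

theorem isCompact_forall_coord_mem (G : ℕ → Finset ℕ) :
    IsCompact {z : MarkovShift A | ∀ i, z.1 i ∈ G i} := by
  convert isClosedEmbedding_val.isCompact_preimage
    (isCompact_univ_pi fun i => (G i).finite_toSet.isCompact) using 1
  ext z
  simp only [Set.mem_ofPred_eq, Set.mem_preimage, Set.mem_univ_pi, Finset.mem_coe]

theorem nhds_basis_cylOf (a : MarkovShift A) : (𝓝 a).HasBasis (fun _ => True) (cylOf a) := by
  refine ⟨fun U => ⟨fun hU => ?_, fun ⟨m, _, hm⟩ => mem_of_superset ?_ hm⟩⟩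
  · obtain ⟨W, hW, hWU⟩ := (mem_nhds_subtype _ _ _).1 hU
    obtain ⟨_, ⟨x, m, rfl⟩, ha, hm⟩ :=
      (PiNat.isTopologicalBasis_cylinders fun _ => ℕ).mem_nhds_iff.1 hW
    exact ⟨m, trivial, fun z hz => hWU (hm fun i hi => (hz i hi).trans (ha i hi))⟩
  · exact ((PiNat.isOpen_cylinder (fun _ => ℕ) a.1 m).preimage continuous_subtype_val).mem_nhds
      fun _ _ => rfl

theorem dist'_lt_pow_subset_cylOf {r : ℝ} (hr0 : 0 < r) (hr1 : r < 1) (a : MarkovShift A)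
    (m : ℕ) : {z | dist' r a z < r ^ m} ⊆ cylOf a m := by
  intro z (hz : dist' r a z < r ^ m)
  unfold dist' at hz
  split_ifs at hz with haz
  · subst haz
    exact fun _ _ => rfl
  · have hm : m < firstDiff a z haz := (pow_lt_pow_iff_right_of_lt_one₀ hr0 hr1).1 hz
    exact fun i hi => (not_not.1 (Nat.find_min _ (hi.trans hm))).symm

theorem dist'_le_pow_of_mem_cylOf {r : ℝ} (hr0 : 0 ≤ r) (hr1 : r ≤ 1) {a z : MarkovShift A}
    {m : ℕ} (hz : z ∈ cylOf a m) : dist' r a z ≤ r ^ m := by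
  unfold dist'
  split_ifs with haz
  · positivity
  · exact pow_le_pow_of_le_one hr0 hr1
      ((Nat.le_find_iff _ _).2 fun i hi hne => hne (hz i hi).symm)

theorem nhds_basis_dist' {r : ℝ} (hr0 : 0 < r) (hr1 : r < 1) (a : MarkovShift A) :
    (𝓝 a).HasBasis (fun ε : ℝ => 0 < ε) (fun ε => {z | dist' r a z < ε}) := by
  refine (nhds_basis_cylOf a).to_hasBasis
    (fun m _ => ⟨r ^ m, by positivity, dist'_lt_pow_subset_cylOf hr0 hr1 a m⟩) fun ε hε => ?_
  obtain ⟨m, hm⟩ := exists_pow_lt_of_lt_one hε hr1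
  exact ⟨m, trivial, fun z hz => (dist'_le_pow_of_mem_cylOf hr0.le hr1.le hz).trans_lt hm⟩

theorem SatisfiesWalters.continuous {f : MarkovShift A → ℝ} (hf : SatisfiesWalters f) :
    Continuous f := by
  refine continuous_iff_continuousAt.2 fun a => Metric.tendsto_nhds.2 fun ε hε => ?_
  obtain ⟨k, hkε, hk⟩ := ((hf.2.eventually (gt_mem_nhds hε)).and (eventually_ge_atTop 1)).exists
  filter_upwards [(nhds_basis_cylOf a).mem_of_mem (i := 1 + k) trivial] with z hz
  have hmem : |f z - f a| ∈ waltersSet f k := ⟨1, le_rfl, z, a, hz, by simp [birkhoff]⟩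
  exact (le_csSup (hf.1 k hk) hmem).trans_lt hkε

theorem msupport_eq_support (μ : Measure (MarkovShift A)) : msupport μ = μ.support := by
  ext a
  rw [Measure.mem_support_iff_forall]
  refine ⟨fun ha U hU => ?_, fun ha U hU haU => ha U (hU.mem_nhds haU)⟩
  obtain ⟨W, hWU, hW, haW⟩ := mem_nhds_iff.1 hU
  exact (ha W hW haW).trans_le (measure_mono hWU)

theorem exists_isCompact_of_backward {y : ℕ → MarkovShift A} (hy : ∀ n, shift (y (n + 1)) = y n)
    {F : Finset ℕ} (hF : ∀ n, (y (n + 1)).1 0 ∈ F) :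
    ∃ K : Set (MarkovShift A), IsCompact K ∧ ∀ n, y n ∈ K := by
  let G (i : ℕ) : Finset ℕ := F ∪ (Finset.range (i + 1)).image (y 0).1
  have hG (i : ℕ) : G i ⊆ G (i + 1) := by
    apply Finset.union_subset_union_right (Finset.image_subset_image _)
    simp
  refine ⟨{z | ∀ i, z.1 i ∈ G i}, isCompact_forall_coord_mem G, fun n => ?_⟩
  induction n with
  | zero => exact fun i => Finset.mem_union_right _ (Finset.mem_image_of_mem _ (by simp))
  | succ n ih =>
    rintro (_ | i)
    · exact Finset.mem_union_left _ (hF n)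
    · have hi : (y (n + 1)).1 (i + 1) = (y n).1 i := by rw [← hy n]; rfl
      exact hi ▸ hG i (ih i)

/-- The potential tends to `-∞` as the first symbol tends to infinity: every superlevel set meets
only finitely many 1-cylinders. -/
def IsCoercive (f : MarkovShift A → ℝ) : Prop :=
  ∀ t : ℝ, ((fun z : MarkovShift A => z.1 0) '' {z | t ≤ f z}).Finite

section Coercivity

variable {f : MarkovShift A → ℝ}

theorem Var1Finite.exists_symbol_bounds (hf : Var1Finite f) :
    ∃ (B : ℕ → ℝ) (D : ℝ), ∀ z, B (z.1 0) ≤ f z ∧ f z ≤ B (z.1 0) + D := by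
  obtain ⟨D, hD⟩ := hf
  have hosc (x z : MarkovShift A) (h : x.1 0 = z.1 0) : f x - D ≤ f z := by
    have hxz : |f x - f z| ≤ D :=
      hD ⟨x, z, fun i hi => by rwa [Nat.lt_one_iff.1 hi], by simp [birkhoff]⟩
    linarith [le_of_abs_le hxz]
  refine ⟨fun c => sInf (f '' {z | z.1 0 = c}), D, fun z => ⟨?_, ?_⟩⟩
  · refine csInf_le ⟨f z - D, ?_⟩ (Set.mem_image_of_mem f rfl)
    rintro _ ⟨x, hx, rfl⟩
    exact hosc z x hx.symm
  · refine sub_le_iff_le_add.1 (le_csInf ⟨f z, Set.mem_image_of_mem f rfl⟩ ?_)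
    rintro _ ⟨x, hx, rfl⟩
    exact hosc z x hx.symm

theorem exists_periodic {u : ℕ → ℕ} {n : ℕ} (hn : 0 < n)
    (hu : ∀ i < n, A (u i) (u (i + 1)) = true) (hclose : u n = u 0) :
    ∃ x : MarkovShift A, shift^[n] x = x ∧ ∀ i < n, x.1 i = u i := by
  have hwrap (i : ℕ) : u ((i + 1) % n) = u (i % n + 1) := by
    rw [← Nat.mod_add_mod]
    have hle : i % n + 1 ≤ n := Nat.mod_lt i hn
    rcases hle.eq_or_lt with h | h
    · rw [h, Nat.mod_self, hclose]
    · rw [Nat.mod_eq_of_lt h]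
  have hadm (i : ℕ) : A (u (i % n)) (u ((i + 1) % n)) = true := by
    simpa only [hwrap] using hu _ (Nat.mod_lt i hn)
  let x : MarkovShift A := ⟨fun i => u (i % n), hadm⟩
  refine ⟨x, Subtype.ext (funext fun i => ?_), fun i hi => congrArg u (Nat.mod_eq_of_lt hi)⟩
  exact (shift_iterate_val x n i).trans (congrArg u (Nat.add_mod_right i n))

theorem exists_periodic_mem_cylinder {a : ℕ} {l : List ℕ}
    (h : List.IsChain (fun u v => A u v = true) (a :: l ++ [a])) :
    ∃ x : MarkovShift A, shift^[(a :: l).length] x = x ∧ x ∈ cylinder (a :: l) := by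
  obtain ⟨x, hper, hx⟩ := exists_periodic (u := fun i => (a :: l ++ [a]).getD i 0)
    (n := (a :: l).length) (by simp)
    (fun i hi => by
      have hi' : i + 1 < (a :: l ++ [a]).length := by simpa using hi
      simpa only [List.getD_eq_getElem _ _ hi', List.getD_eq_getElem _ _ (i.lt_succ_self.trans hi')]
        using List.isChain_iff_getElem.1 h i hi')
    (by simp)
  refine ⟨x, hper, fun i => (hx i i.2).trans ?_⟩
  rw [List.getD_append _ _ _ _ i.2, List.getD_eq_getElem _ _ i.2, List.get_eq_getElem]

theorem exists_periodic_through {K₀ : ℕ} {F : Finset ℕ}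
    (hF : ∀ a b : ℕ, Admissible A a → Admissible A b →
      ∃ w : List ℕ, w.length = K₀ ∧ (∀ c ∈ w, c ∈ F) ∧
        List.IsChain (fun u v => A u v = true) (a :: (w ++ [b])))
    {a b : ℕ} (ha : Admissible A a) (hb : Admissible A b) :
    ∃ w₁ w₂ : List ℕ, (w₁.length = K₀ ∧ ∀ c ∈ w₁, c ∈ F) ∧ (w₂.length = K₀ ∧ ∀ c ∈ w₂, c ∈ F) ∧
      ∃ x : MarkovShift A, shift^[2 * K₀ + 2] x = x ∧ x ∈ cylinder (a :: (w₁ ++ b :: w₂)) := by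
  obtain ⟨w₁, hlen₁, hF₁, hab⟩ := hF a b ha hb
  obtain ⟨w₂, hlen₂, hF₂, hba⟩ := hF b a hb ha
  have hloop : List.IsChain (fun u v => A u v = true) (a :: (w₁ ++ b :: w₂) ++ [a]) := by
    simpa using List.isChain_split (l₁ := a :: w₁).2 ⟨hab, hba⟩
  obtain ⟨x, hper, hcyl⟩ := exists_periodic_mem_cylinder hloop
  refine ⟨w₁, w₂, ⟨hlen₁, hF₁⟩, ⟨hlen₂, hF₂⟩, x, ?_, hcyl⟩
  convert hper using 2
  simp only [List.length_cons, List.length_append]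
  omega

theorem sum_map_le_birkhoff {B : ℕ → ℝ} (hB : ∀ z, B (z.1 0) ≤ f z) {l : List ℕ}
    {x : MarkovShift A} (hx : x ∈ cylinder l) : (l.map B).sum ≤ birkhoff f l.length x := by
  rw [birkhoff, Finset.sum_range, ← Fin.sum_univ_fun_getElem]
  refine Finset.sum_le_sum fun i _ => ?_
  have hi := hB (shift^[i] x)
  rw [shift_iterate_val, zero_add, hx i] at hi
  exact hi

theorem exists_loop_le_birkhoff (hA : FinitelyPrimitive A) {B : ℕ → ℝ}
    (hB : ∀ z, B (z.1 0) ≤ f z) {a : ℕ} (ha : Admissible A a) :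
    ∃ n k c, 1 ≤ n ∧ ∀ b, Admissible A b → ∃ x : MarkovShift A,
      (shift^[n] x = x ∧ x.1 0 = a) ∧ x.1 k = b ∧ c + B b ≤ birkhoff f n x := by
  obtain ⟨K₀, F, hF⟩ := hA
  obtain ⟨β, hβ⟩ := (F.image B).bddBelow
  have hword {w : List ℕ} (hw : w.length = K₀ ∧ ∀ c ∈ w, c ∈ F) : K₀ * β ≤ (w.map B).sum := by
    have h := (w.map B).card_nsmul_le_sum β fun v hv => by
      obtain ⟨c, hc, rfl⟩ := List.mem_map.1 hv
      exact hβ (Finset.mem_coe.2 (Finset.mem_image_of_mem B (hw.2 c hc)))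
    rwa [List.length_map, hw.1, nsmul_eq_mul] at h
  refine ⟨2 * K₀ + 2, K₀ + 1, B a + 2 * (K₀ * β), by omega, fun b hb => ?_⟩
  obtain ⟨w₁, w₂, hw₁, hw₂, x, hper, hcyl⟩ := exists_periodic_through hF ha hb
  have hlen : (a :: (w₁ ++ b :: w₂)).length = 2 * K₀ + 2 := by
    simp only [List.length_cons, List.length_append, hw₁.1, hw₂.1]
    omega
  refine ⟨x, ⟨hper, hcyl ⟨0, by omega⟩⟩, ?_, ?_⟩
  · simpa [← hw₁.1] using hcyl ⟨K₀ + 1, by omega⟩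
  · have hsum := sum_map_le_birkhoff hB hcyl
    rw [hlen] at hsum
    simp only [List.map_cons, List.map_append, List.sum_cons, List.sum_append] at hsum
    linarith [hword hw₁, hword hw₂]

theorem HasGurevichPressure.summable_exp {p : ℝ} (hf : HasGurevichPressure f p)
    (hA : FinitelyPrimitive A) {B : ℕ → ℝ} (hB : ∀ z, B (z.1 0) ≤ f z) :
    Summable fun b : {b // Admissible A b} => Real.exp (B b) := by
  rcases isEmpty_or_nonempty {b // Admissible A b} with _ | ⟨⟨a, ha⟩⟩
  · exact summable_empty
  obtain ⟨n, k, c, hn, hloop⟩ := exists_loop_le_birkhoff hA hB ha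
  choose x hper hk hc using fun b : {b // Admissible A b} => hloop b b.2
  have hinj : Function.Injective fun b => (⟨x b, hper b⟩ : {x // shift^[n] x = x ∧ x.1 0 = a}) :=
    fun b b' hbb' => by
      have hx : x b = x b' := congrArg Subtype.val hbb'
      exact Subtype.ext (by rw [← hk b, ← hk b', hx])
  refine .of_nonneg_of_le (fun b => (Real.exp_pos _).le) (fun b => ?_)
    ((((hf a ha).1 n hn).comp_injective hinj).mul_left (Real.exp (-c)))
  rw [Function.comp_apply, ← Real.exp_add]
  exact Real.exp_le_exp.2 (by linarith [hc b])

theorem HasGurevichPressure.isCoercive {p : ℝ} (hf : HasGurevichPressure f p)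
    (hA : FinitelyPrimitive A) (hvar : Var1Finite f) : IsCoercive f := by
  intro t
  obtain ⟨B, D, hB⟩ := hvar.exists_symbol_bounds
  have hfin : {b : {b // Admissible A b} | ¬ Real.exp (B b) < Real.exp (t - D)}.Finite :=
    (hf.summable_exp hA fun z => (hB z).1).tendsto_cofinite_zero.eventually
      (gt_mem_nhds (Real.exp_pos _))
  refine (hfin.image Subtype.val).subset ?_
  rintro _ ⟨z, hz : t ≤ f z, rfl⟩
  refine ⟨⟨z.1 0, z, rfl⟩, ?_, rfl⟩
  exact not_lt.2 (Real.exp_le_exp.2 (by linarith [(hB z).2]))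

end Coercivity

section ManePotential

variable {f V : MarkovShift A → ℝ} {a x : MarkovShift A} {r c : ℝ}

theorem manePot_le_of_mem_nhds (hr0 : 0 < r) (hr1 : r < 1) {U : Set (MarkovShift A)} (hU : U ∈ 𝓝 a)
    (h : ∀ z ∈ U, ∀ n, shift^[n] z = x → birkhoff (fun w => f w - mf f) n z ≤ c) :
    manePot r f a x ≤ c := by
  obtain ⟨ε, hε, hεU⟩ := (nhds_basis_dist' hr0 hr1 a).mem_iff.1 hU
  refine (iInf_le _ ⟨ε, hε⟩).trans (iSup_le fun n => iSup_le fun z => ?_)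
  exact EReal.coe_le_coe_iff.2 (h z (hεU z.2.1) n z.2.2)

theorem le_manePot_of_forall_nhds (hr0 : 0 < r) (hr1 : r < 1)
    (h : ∀ U ∈ 𝓝 a, ∃ z ∈ U, ∃ n, 1 ≤ n ∧ shift^[n] z = x ∧
      c ≤ birkhoff (fun w => f w - mf f) n z) :
    (c : EReal) ≤ manePot r f a x := by
  refine le_iInf fun ε => ?_
  obtain ⟨z, hz, n, hn, hzx, hc⟩ := h _ ((nhds_basis_dist' hr0 hr1 a).mem_of_mem ε.2)
  exact le_iSup_of_le ⟨n, hn⟩ (le_iSup_of_le ⟨z, hz, hzx⟩ (EReal.coe_le_coe_iff.2 hc))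

theorem exists_isMaximizing_of_calibrated (hf : Continuous f) (hV : BoundedFun V)
    {y : ℕ → MarkovShift A} (hy : IsCalibratedBackwardOrbit shift (fun w => f w - mf f) V y)
    {K : Set (MarkovShift A)} (hK : IsCompact K) (hyK : ∀ n, y (n + 1) ∈ K) :
    ∃ ν, IsMaximizing f ν ∧ ∀ᵐ z ∂ν, z ∈ K := by
  obtain ⟨C, hC⟩ := hV
  obtain ⟨ν, hν, hinv, hνK, hzero⟩ := hy.exists_invariant_measure continuous_shift
    (hf.sub continuous_const) (fun n => hC (y n)) hK hyK
  have hint : Integrable f ν := integrable_of_ae_mem_isCompact hK hνK hf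
  refine ⟨ν, ⟨⟨hν, hinv⟩, hint, ?_⟩, hνK⟩
  simpa [integral_sub hint (integrable_const _), sub_eq_zero] using hzero

theorem IsCoercive.exists_isCompact_of_calibrated (hf : IsCoercive f) (hV : BoundedFun V)
    {y : ℕ → MarkovShift A} (hy : IsCalibratedBackwardOrbit shift (fun w => f w - c) V y) :
    ∃ K : Set (MarkovShift A), IsCompact K ∧ ∀ n, y n ∈ K := by
  obtain ⟨C, hC⟩ := hV
  refine exists_isCompact_of_backward hy.map_succ (F := (hf (c - 2 * C)).toFinset) fun n => ?_
  refine (hf _).mem_toFinset.2 (Set.mem_image_of_mem _ ?_)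
  have hlow : c - 2 * C ≤ f (y (n + 1)) := by
    linarith [hy.apply_succ n, neg_le_of_abs_le (hC (y n)), le_of_abs_le (hC (y (n + 1)))]
  exact hlow

theorem exists_calibrated_mem_of_mem_msupport (hf : Continuous f) (hcoer : IsCoercive f)
    {μ : Measure (MarkovShift A)} (huniq : ∀ ν, IsMaximizing f ν → ν = μ) (ha : a ∈ msupport μ)
    (hV : BoundedFun V) {y : ℕ → MarkovShift A}
    (hy : IsCalibratedBackwardOrbit shift (fun w => f w - mf f) V y)
    {U : Set (MarkovShift A)} (hU : U ∈ 𝓝 a) : ∃ n, y (n + 1) ∈ U := by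
  obtain ⟨W, hWU, hW, haW⟩ := mem_nhds_iff.1 hU
  obtain ⟨K, hK, hyK⟩ := hcoer.exists_isCompact_of_calibrated hV hy
  by_contra! hUy
  obtain ⟨ν, hν, hνW⟩ := exists_isMaximizing_of_calibrated hf hV hy (hK.diff hW)
    fun n => ⟨hyK (n + 1), fun h => hUy n (hWU h)⟩
  have hnull : μ W = 0 := by
    rw [← huniq ν hν]
    exact measure_mono_null (t := (K \ W)ᶜ) (fun z hz hzK => hzK.2 hz) hνW
  exact (ha W hW haW).ne' hnull

namespace IsCalibratedSubaction

theorem manePot_le (hV : IsCalibratedSubaction f V) (hr0 : 0 < r) (hr1 : r < 1) :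
    manePot r f a x ≤ ((V x - V a : ℝ) : EReal) := by
  refine EReal.le_of_forall_lt_iff_le.1 fun c hc => ?_
  have hU : {z | V x - V z < c} ∈ 𝓝 a :=
    (continuous_const.sub hV.1).continuousAt.eventually (gt_mem_nhds (EReal.coe_lt_coe_iff.1 hc))
  refine manePot_le_of_mem_nhds hr0 hr1 hU fun z hz n hzx => ?_
  have hsub (w : MarkovShift A) : f w - mf f ≤ V (shift w) - V w := by linarith [hV.2.2.1 w]
  calc birkhoff (fun w => f w - mf f) n z
    _ = birkhoffSum shift (fun w => f w - mf f) n z := birkhoff_eq_birkhoffSum _ n z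
    _ ≤ V (shift^[n] z) - V z := birkhoffSum_le_of_le_coboundary hsub n z
    _ = V x - V z := by rw [hzx]
    _ ≤ c := le_of_lt hz

theorem le_manePot (hV : IsCalibratedSubaction f V) (hr0 : 0 < r) (hr1 : r < 1)
    (hf : Continuous f) (hcoer : IsCoercive f) {μ : Measure (MarkovShift A)}
    (huniq : ∀ ν, IsMaximizing f ν → ν = μ) (ha : a ∈ msupport μ) :
    ((V x - V a : ℝ) : EReal) ≤ manePot r f a x := by
  have hpre (y : MarkovShift A) : ∃ z, shift z = y ∧ f z - mf f = V y - V z := by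
    obtain ⟨z, rfl, hz⟩ := hV.2.2.2 y
    exact ⟨z, rfl, by linarith⟩
  obtain ⟨y, rfl, hy⟩ := exists_isCalibratedBackwardOrbit hpre x
  refine EReal.ge_of_forall_gt_iff_ge.1 fun c hc => ?_
  refine le_manePot_of_forall_nhds hr0 hr1 fun U hU => ?_
  have hc' : {z | c < V (y 0) - V z} ∈ 𝓝 a :=
    (continuous_const.sub hV.1).continuousAt.eventually (lt_mem_nhds (EReal.coe_lt_coe_iff.1 hc))
  obtain ⟨n, hnU, hnc⟩ := exists_calibrated_mem_of_mem_msupport hf hcoer huniq ha hV.2.1 hy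
    (inter_mem hU hc')
  refine ⟨y (n + 1), hnU, n + 1, by omega, hy.iterate_apply (n + 1), ?_⟩
  rw [birkhoff_eq_birkhoffSum, hy.birkhoffSum_eq]
  exact le_of_lt hnc

theorem manePot_eq (hV : IsCalibratedSubaction f V) (hr0 : 0 < r) (hr1 : r < 1)
    (hf : Continuous f) (hcoer : IsCoercive f) {μ : Measure (MarkovShift A)}
    (huniq : ∀ ν, IsMaximizing f ν → ν = μ) (ha : a ∈ msupport μ) (x : MarkovShift A) :
    manePot r f a x = ((V x - V a : ℝ) : EReal) :=
  (hV.manePot_le hr0 hr1).antisymm (hV.le_manePot hr0 hr1 hf hcoer huniq ha)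

end IsCalibratedSubaction

end ManePotential

theorem calibrated_subactions_from_mane_potential_general {r : ℝ} (hr0 : 0 < r) (hr1 : r < 1)
    {f : MarkovShift A → ℝ} (hf : Continuous f) (hcoer : IsCoercive f)
    {μ : Measure (MarkovShift A)} (hmax : IsMaximizing f μ)
    (huniq : ∀ ν, IsMaximizing f ν → ν = μ) :
    (∀ a ∈ msupport μ, ∀ V : MarkovShift A → ℝ, IsCalibratedSubaction f V →
        ∀ x : MarkovShift A, (V x : EReal) = V a + manePot r f a x) ∧
      (∀ V₁ V₂ : MarkovShift A → ℝ, IsCalibratedSubaction f V₁ →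
        IsCalibratedSubaction f V₂ → ∃ c : ℝ, ∀ x, V₁ x = V₂ x + c) := by
  have hmane (a) (ha : a ∈ msupport μ) (V) (hV : IsCalibratedSubaction f V) :=
    hV.manePot_eq hr0 hr1 hf hcoer huniq ha
  refine ⟨fun a ha V hV x => ?_, fun V₁ V₂ hV₁ hV₂ => ?_⟩
  · rw [hmane a ha V hV, ← EReal.coe_add, add_sub_cancel]
  · have := hmax.1.1
    obtain ⟨a, ha⟩ : (msupport μ).Nonempty :=
      msupport_eq_support μ ▸ Measure.nonempty_support (IsProbabilityMeasure.ne_zero μ)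
    refine ⟨V₁ a - V₂ a, fun x => ?_⟩
    have hsub : V₁ x - V₁ a = V₂ x - V₂ a :=
      EReal.coe_injective ((hmane a ha V₁ hV₁ x).symm.trans (hmane a ha V₂ hV₂ x))
    linarith

end

/-- If the maximizing measure is unique then, for any `a` in its support and any bounded
calibrated sub-action `V`, `V(x) = V(a) + S_f(a,x)`; in particular any two bounded
calibrated sub-actions differ by a constant. -/
theorem calibrated_subactions_from_mane_potential
    (A : ℕ → ℕ → Bool) (r : ℝ) (hr0 : 0 < r) (hr1 : r < 1)
    (hmix : TopologicallyMixing A)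
    (hbip : FinitelyPrimitive A)
    (f : MarkovShift A → ℝ)
    (hWalters : SatisfiesWalters f)
    (hVar1 : Var1Finite f)
    (p : ℝ)
    (hPfin : HasGurevichPressure f p)
    (μmax : Measure (MarkovShift A))
    (hmax : IsMaximizing f μmax)
    (huniq : ∀ ν', IsMaximizing f ν' → ν' = μmax) :
    (∀ a ∈ msupport μmax, ∀ V : MarkovShift A → ℝ, IsCalibratedSubaction f V →
        ∀ x : MarkovShift A, ((V x : ℝ) : EReal) = ((V a : ℝ) : EReal) + manePot r f a x) ∧
      (∀ V₁ V₂ : MarkovShift A → ℝ, IsCalibratedSubaction f V₁ →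
        IsCalibratedSubaction f V₂ → ∃ c : ℝ, ∀ x, V₁ x = V₂ x + c) :=
  calibrated_subactions_from_mane_potential_general hr0 hr1 hWalters.continuous
    (hPfin.isCoercive hbip hVar1) hmax huniq

end MarkovShift
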